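/- Let n ≥ 2, 1 ≤ j ≤ n, a ∈ ℂⁿ, let φ be a (0,j)-coefficient system on ℂⁿ, and fix distinct indices k ≠ l in {1,…,n}. Then Σ'_{|J|=j−1, k∈J} φ_{lJ} a_k − Σ'_{|J|=j−1, k∉J} φ_{lJ} · ( Σ_{m∈J} σ^{m(k∪(J∖m))}_{kJ} a_m ) = Σ'_{|J|=j−1, l∈J, k∉J} σ^{l(k∪(J∖l))}_{kJ} · ( Σ_{m=1}^n a_m φ_{mJ} ). -/

import Mathlib

open scoped BigOperators
open MeasureTheory

namespace HM

/-- The finset of strictly increasing multi-indices of length `q` with entries in `Fin n`. -/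
def Incr (n q : ℕ) : Finset (Fin q → Fin n) :=
  Finset.univ.filter (fun I => ∀ a b : Fin q, a < b → I a < I b)

/-- Prepend the index `k` to a `(q-1)`-tuple `J`, giving the `q`-tuple `kJ`. -/
def cons' {n : ℕ} (q : ℕ) (k : Fin n) (J : Fin (q - 1) → Fin n) : Fin q → Fin n :=
  fun i => if h : (i : ℕ) = 0 then k else J ⟨(i : ℕ) - 1, by have := i.isLt; omega⟩

/-- A (0,q)-coefficient system: an antisymmetric assignment of complex numbers to q-tuples
(hence vanishing on tuples with a repeated index). -/
def IsCoeff {n q : ℕ} (u : (Fin q → Fin n) → ℂ) : Prop :=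
  ∀ (σ : Equiv.Perm (Fin q)) (I : Fin q → Fin n),
    u (I ∘ σ) = ((Equiv.Perm.sign σ : ℤ) : ℂ) * u I

/-- `|u|²`, the sum of `|u_I|²` over strictly increasing multi-indices `I`. -/
noncomputable def nSq {n q : ℕ} (u : (Fin q → Fin n) → ℂ) : ℝ :=
  ∑ I ∈ Incr n q, ‖u I‖ ^ 2

/-- The Hessian form of a matrix `H` on coefficient systems:
`H(u,v) = Σ'_{|J|=q-1} Σ_{k,l} H_{lk} u_{lJ} conj(v_{kJ})`. -/
noncomputable def mForm {n : ℕ} (q : ℕ) (H : Matrix (Fin n) (Fin n) ℂ)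
    (u v : (Fin q → Fin n) → ℂ) : ℂ :=
  ∑ J ∈ Incr n (q - 1), ∑ k : Fin n, ∑ l : Fin n,
    H l k * u (cons' q l J) * star (v (cons' q k J))

/-- `σ^I_J`: the sign of the permutation rearranging `I` into `J`; `0` if `J` is not a
rearrangement of `I` (in particular `0` if `I` has a repeated entry). -/
def permSign {n p : ℕ} (I J : Fin p → Fin n) : ℤ :=
  if Function.Injective I then
    ∑ π : Equiv.Perm (Fin p), if J = I ∘ π then ((Equiv.Perm.sign π : ℤ)) else 0
  else 0

/-- The Wirtinger derivative `∂f/∂z_k` of a complex-valued function, via real Fréchet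
derivatives: `½(∂f/∂x_k − i ∂f/∂y_k)`. -/
noncomputable def dz {n : ℕ} (f : (Fin n → ℂ) → ℂ) (k : Fin n) (z : Fin n → ℂ) : ℂ :=
  (1/2 : ℂ) * (fderiv ℝ f z (Pi.single k 1) - Complex.I * fderiv ℝ f z (Pi.single k Complex.I))

/-- The Wirtinger derivative `∂f/∂z̄_k`: `½(∂f/∂x_k + i ∂f/∂y_k)`. -/
noncomputable def dzbar {n : ℕ} (f : (Fin n → ℂ) → ℂ) (k : Fin n) (z : Fin n → ℂ) : ℂ :=
  (1/2 : ℂ) * (fderiv ℝ f z (Pi.single k 1) + Complex.I * fderiv ℝ f z (Pi.single k Complex.I))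

/-- The mixed Wirtinger Hessian `∂²f/∂z_l∂z̄_k` of a real-valued function. -/
noncomputable def hessW {n : ℕ} (f : (Fin n → ℂ) → ℝ) (l k : Fin n) (z : Fin n → ℂ) : ℂ :=
  dz (fun w => dzbar (fun y => (f y : ℂ)) k w) l z

/-- The Hessian form `i∂∂̄f(u,u)(z) = Σ'_{|J|=q-1} Σ_{k,l} ∂²f/∂z_l∂z̄_k(z) u_{lJ} conj(u_{kJ})`. -/
noncomputable def hForm {n : ℕ} (q : ℕ) (f : (Fin n → ℂ) → ℝ)
    (u : (Fin q → Fin n) → ℂ) (z : Fin n → ℂ) : ℂ :=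
  ∑ J ∈ Incr n (q - 1), ∑ k : Fin n, ∑ l : Fin n,
    hessW f l k z * u (cons' q l J) * star (u (cons' q k J))

/-- Coefficient of `∂̄u` on the `(q+1)`-tuple `M`:
`(∂̄u)_M = Σ_k Σ'_{|J|=q} σ^{kJ}_M ∂u_J/∂z̄_k`. -/
noncomputable def dbarC {n : ℕ} (q : ℕ) (u : (Fin q → Fin n) → (Fin n → ℂ) → ℂ)
    (M : Fin (q + 1) → Fin n) (z : Fin n → ℂ) : ℂ :=
  ∑ k : Fin n, ∑ J ∈ Incr n q, ((permSign (cons' (q + 1) k J) M : ℤ) : ℂ) * dzbar (u J) k z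

/-- Coefficient of `ϑu` on the `(q-1)`-tuple `J`: `(ϑu)_J = −Σ_l ∂u_{lJ}/∂z_l`. -/
noncomputable def thetaC {n : ℕ} (q : ℕ) (u : (Fin q → Fin n) → (Fin n → ℂ) → ℂ)
    (J : Fin (q - 1) → Fin n) (z : Fin n → ℂ) : ℂ :=
  -∑ l : Fin n, dz (u (cons' q l J)) l z

/-- Pointwise `|∂̄u|²`. -/
noncomputable def dbarSq {n : ℕ} (q : ℕ) (u : (Fin q → Fin n) → (Fin n → ℂ) → ℂ)
    (z : Fin n → ℂ) : ℝ :=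
  ∑ M ∈ Incr n (q + 1), ‖dbarC q u M z‖ ^ 2

/-- Pointwise `|ϑu|²`. -/
noncomputable def thetaSq {n : ℕ} (q : ℕ) (u : (Fin q → Fin n) → (Fin n → ℂ) → ℂ)
    (z : Fin n → ℂ) : ℝ :=
  ∑ J ∈ Incr n (q - 1), ‖thetaC q u J z‖ ^ 2

/-- Remove the `i`-th entry of a `j`-tuple, giving a `(j-1)`-tuple. -/
def removeIdx {n j : ℕ} (I : Fin j → Fin n) (i : Fin j) : Fin (j - 1) → Fin n :=
  fun t => if (t : ℕ) < (i : ℕ) then I ⟨t, by have := t.isLt; omega⟩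
    else I ⟨(t : ℕ) + 1, by have := t.isLt; omega⟩

/-- The increasing `j`-tuple listing a finset `S` (with default `d` out of range). -/
def sortedTuple {n : ℕ} (j : ℕ) (S : Finset (Fin n)) (d : Fin n) : Fin j → Fin n :=
  fun t => (S.sort (· ≤ ·)).getD t d

end HM


namespace HMaux
open HM Finset

lemma cons'_eq {n q : ℕ} (k : Fin n) (J : Fin q → Fin n) :
    cons' (q + 1) k J = (Fin.cons k J : Fin (q + 1) → Fin n) := by
  funext i
  refine Fin.cases ?_ (fun i => ?_) i
  · simp [cons']
  · simp [cons']

lemma permSign_comp {n p : ℕ} (I J : Fin p → Fin n) (π : Equiv.Perm (Fin p)) :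
    permSign I (J ∘ π) = permSign I J * (Equiv.Perm.sign π : ℤ) := by
  unfold permSign
  split_ifs with h
  · rw [Finset.sum_mul]
    symm
    refine Fintype.sum_equiv (Equiv.mulRight π) _ _ (fun ρ => ?_)
    have : (J ∘ π = I ∘ (ρ * π : Equiv.Perm (Fin p))) ↔ J = I ∘ ρ := by
      constructor
      · intro h
        funext x
        have := congrFun h (π⁻¹ x)
        simpa using this
      · rintro rfl
        rfl
    rw [Equiv.coe_mulRight]
    simp only [this, Equiv.Perm.sign_mul, Units.val_mul, ite_mul, zero_mul]
  · simp

lemma permSign_map {n p : ℕ} (I J : Fin p → Fin n) (τ : Equiv.Perm (Fin n)) :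
    permSign (τ ∘ I) (τ ∘ J) = permSign I J := by
  unfold permSign
  have h1 : Function.Injective (τ ∘ I) ↔ Function.Injective I :=
    τ.injective.of_comp_iff I
  have h2 : ∀ π : Equiv.Perm (Fin p), (τ ∘ J = (τ ∘ I) ∘ π) ↔ J = I ∘ π := by
    intro π
    rw [Function.comp_assoc]
    exact τ.injective.comp_left.eq_iff
  simp only [h1, h2]

lemma permSign_self {n p : ℕ} (I : Fin p → Fin n) (hI : Function.Injective I) :
    permSign I I = 1 := by
  unfold permSign
  rw [if_pos hI, Finset.sum_eq_single 1]
  · simp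
  · intro π _ hπ
    rw [if_neg]
    intro h
    apply hπ
    ext x
    have := hI (congrFun h x)
    simp [← this]
  · simp

lemma coeff_zero {n q : ℕ} {φ : (Fin q → Fin n) → ℂ} (hφ : IsCoeff φ) (I : Fin q → Fin n)
    (a b : Fin q) (hab : a ≠ b) (h : I a = I b) : φ I = 0 := by
  have h1 := hφ (Equiv.swap a b) I
  have h2 : I ∘ (Equiv.swap a b) = I := by
    funext x
    simp only [Function.comp, Equiv.swap_apply_def]
    split_ifs with h3 h4
    · rw [h3, h]
    · rw [h4, h]
    · rfl
  rw [h2, Equiv.Perm.sign_swap hab] at h1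
  push_cast at h1
  linear_combination h1 / 2

lemma sorted_eq {n q : ℕ} (S : Finset (Fin n)) (h : S.card = q) (d : Fin n) :
    sortedTuple q S d = S.orderEmbOfFin h := by
  funext t
  unfold sortedTuple
  rw [Finset.orderEmbOfFin_apply, List.getD_eq_getElem _ _ (by rw [Finset.length_sort, h]; exact t.isLt)]
  rfl

lemma card_im {n q : ℕ} {J : Fin q → Fin n} (hJ : Function.Injective J) :
    (image J univ).card = q := by
  rw [card_image_of_injective _ hJ]; simp

lemma incr_iff {n q : ℕ} (J : Fin q → Fin n) : J ∈ Incr n q ↔ StrictMono J := by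
  simp [Incr, StrictMono]

lemma sorted_incr {n q : ℕ} {J : Fin q → Fin n} (hJ : J ∈ Incr n q) (d : Fin n) :
    sortedTuple q (image J univ) d = J := by
  rw [incr_iff] at hJ
  rw [sorted_eq _ (card_im hJ.injective)]
  symm
  exact Finset.orderEmbOfFin_unique _ (fun x => by simp) hJ

lemma sorted_mem {n q : ℕ} {J : Fin q → Fin n} (hJ : Function.Injective J) (d : Fin n) :
    sortedTuple q (image J univ) d ∈ Incr n q := by
  rw [incr_iff, sorted_eq _ (card_im hJ)]
  exact OrderEmbedding.strictMono _

lemma sorted_im {n q : ℕ} {J : Fin q → Fin n} (hJ : Function.Injective J) (d : Fin n) :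
    image (sortedTuple q (image J univ) d) univ = image J univ := by
  rw [sorted_eq _ (card_im hJ)]
  simp

lemma sorted_perm {n q : ℕ} {J : Fin q → Fin n} (hJ : Function.Injective J) (d : Fin n) :
    ∃ π : Equiv.Perm (Fin q), sortedTuple q (image J univ) d = J ∘ π := by
  have h : ∀ x, ∃ y, J y = sortedTuple q (image J univ) d x := by
    intro x
    have : sortedTuple q (image J univ) d x ∈ image J univ := by
      have h0 := mem_image_of_mem (sortedTuple q (image J univ) d) (mem_univ x)
      rwa [sorted_im hJ d] at h0
    simpa using this
  choose f hf using h
  have hinj : Function.Injective f := by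
    intro x y hxy
    have := (incr_iff _).1 (sorted_mem hJ d)
    apply this.injective
    rw [← hf, ← hf, hxy]
  refine ⟨Equiv.ofBijective f (Finite.injective_iff_bijective.1 hinj), ?_⟩
  funext x
  simp [hf]

lemma im_comp {n q : ℕ} (τ : Fin n → Fin n) (J : Fin q → Fin n) :
    image (τ ∘ J) univ = image τ (image J univ) := by
  rw [image_image]

lemma reindex {n q : ℕ} (d : Fin n) (G : (Fin q → Fin n) → ℂ)
    (hG : ∀ J, Function.Injective J → ∀ π : Equiv.Perm (Fin q), G (J ∘ π) = G J)
    (τ : Equiv.Perm (Fin n)) (hτ : ∀ x, τ (τ x) = x) :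
    ∑ J ∈ Incr n q, G (τ ∘ J) = ∑ J ∈ Incr n q, G J := by
  have inj : ∀ J ∈ Incr n q, Function.Injective (τ ∘ J) := fun J hJ =>
    τ.injective.comp ((incr_iff J).1 hJ).injective
  have inv : ∀ J ∈ Incr n q, sortedTuple q (image (τ ∘ sortedTuple q (image (τ ∘ J) univ) d) univ) d = J := by
    intro J hJ
    rw [im_comp τ (sortedTuple q (image (τ ∘ J) univ) d), sorted_im (inj J hJ), ← im_comp]
    have : τ ∘ (τ ∘ J) = J := by funext x; simp [hτ]
    rw [this, sorted_incr hJ]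
  refine Finset.sum_nbij' (fun J => sortedTuple q (image (τ ∘ J) univ) d)
    (fun J => sortedTuple q (image (τ ∘ J) univ) d)
    (fun J hJ => sorted_mem (inj J hJ) d) (fun J hJ => sorted_mem (inj J hJ) d)
    inv inv ?_
  intro J hJ
  obtain ⟨π, hπ⟩ := sorted_perm (inj J hJ) d
  rw [hπ, hG _ (inj J hJ)]

lemma cons_perm {n q : ℕ} (π : Equiv.Perm (Fin q)) :
    ∃ ρ : Equiv.Perm (Fin (q + 1)), Equiv.Perm.sign ρ = Equiv.Perm.sign π ∧
      ∀ (k : Fin n) (J : Fin q → Fin n),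
        (Fin.cons k (J ∘ π) : Fin (q + 1) → Fin n) = (Fin.cons k J : Fin (q + 1) → Fin n) ∘ ρ := by
  refine ⟨Equiv.Perm.decomposeFin.symm (0, π), by simp, fun k J => ?_⟩
  funext x
  refine Fin.cases ?_ (fun i => ?_) x
  · simp
  · simp

/-- the basic term -/
noncomputable def H {n q : ℕ} (φ : (Fin (q + 1) → Fin n) → ℂ) (k m l : Fin n)
    (J : Fin q → Fin n) : ℂ :=
  if (∃ i, J i = l) ∧ ∀ i, J i ≠ k then
    ((permSign (Fin.cons l (sortedTuple q (insert k ((image J univ).erase l)) k) : Fin (q + 1) → Fin n)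
      (Fin.cons k J : Fin (q + 1) → Fin n) : ℤ) : ℂ) * φ (Fin.cons m J : Fin (q + 1) → Fin n)
  else 0

lemma H_symm {n q : ℕ} {φ : (Fin (q + 1) → Fin n) → ℂ} (hφ : IsCoeff φ) (k m l : Fin n)
    (J : Fin q → Fin n) (π : Equiv.Perm (Fin q)) : H φ k m l (J ∘ π) = H φ k m l J := by
  obtain ⟨ρ, h1, h2⟩ := cons_perm (n := n) π
  have him : image (J ∘ π) univ = image J univ := by
    ext x
    simp only [mem_image, mem_univ, true_and, Function.comp]
    exact π.exists_congr_left.trans (by simp)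
  have hc : ((∃ i, (J ∘ π) i = l) ∧ ∀ i, (J ∘ π) i ≠ k) ↔ ((∃ i, J i = l) ∧ ∀ i, J i ≠ k) := by
    refine and_congr ?_ ?_
    · exact π.exists_congr_left.trans (by simp)
    · exact π.forall_congr_left.trans (by simp)
  unfold H
  simp only [hc, him, h2, permSign_comp, hφ ρ]
  split_ifs
  · have : (((Equiv.Perm.sign ρ : ℤ)) : ℂ) * ((Equiv.Perm.sign ρ : ℤ) : ℂ) = 1 := by
      rw [← Int.cast_mul, ← Units.val_mul, Int.units_mul_self]; simp
    push_cast
    linear_combination (permSign (Fin.cons l (sortedTuple q (insert k ((image J univ).erase l)) k) : Fin (q + 1) → Fin n)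
      (Fin.cons k J : Fin (q + 1) → Fin n) : ℂ) * φ (Fin.cons m J : Fin (q + 1) → Fin n) * this
  · rfl

lemma H_zero {n q : ℕ} {φ : (Fin (q + 1) → Fin n) → ℂ} (hφ : IsCoeff φ) (k m l : Fin n)
    (J : Fin q → Fin n) (i : Fin q) (h : J i = m) : H φ k m l J = 0 := by
  unfold H
  rw [coeff_zero hφ (Fin.cons m J : Fin (q + 1) → Fin n) 0 i.succ (Fin.succ_ne_zero i).symm (by simp [h])]
  simp

lemma comp_cons {n q : ℕ} (τ : Fin n → Fin n) (m : Fin n) (J : Fin q → Fin n) :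
    (Fin.cons (τ m) (τ ∘ J) : Fin (q + 1) → Fin n) = τ ∘ (Fin.cons m J : Fin (q + 1) → Fin n) := by
  funext x
  refine Fin.cases ?_ (fun i => ?_) x <;> simp

lemma cons_inj {n q : ℕ} {l : Fin n} {J : Fin q → Fin n} (hJ : Function.Injective J)
    (hl : ∀ i, J i ≠ l) : Function.Injective (Fin.cons l J : Fin (q + 1) → Fin n) := by
  rw [Fin.cons_injective_iff]
  exact ⟨by simpa using hl, hJ⟩

lemma swap_cons {n q : ℕ} {l : Fin n} {J : Fin q → Fin n} (hJ : Function.Injective J)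
    (hl : ∀ i, J i ≠ l) (i : Fin q) :
    (Fin.cons (J i) (Equiv.swap l (J i) ∘ J) : Fin (q + 1) → Fin n)
      = (Fin.cons l J : Fin (q + 1) → Fin n) ∘ Equiv.swap 0 i.succ := by
  have h := (cons_inj hJ hl).swap_comp 0 i.succ
  simp only [Fin.cons_zero, Fin.cons_succ] at h
  rw [← h, ← comp_cons]
  simp

lemma sorted_swap {n q : ℕ} {S : Finset (Fin n)} (h : S.card = q) (d : Fin n)
    {x : Fin n} (hx : x ∉ S) (t : Fin q) : sortedTuple q S d t ≠ x := by
  rw [sorted_eq _ h]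
  intro h'
  exact hx (h' ▸ Finset.orderEmbOfFin_mem S h t)

lemma key1 {n q : ℕ} {φ : (Fin (q + 1) → Fin n) → ℂ} (hφ : IsCoeff φ) (k m l : Fin n)
    (hkl : k ≠ l) (hmk : m ≠ k) (J : Fin q → Fin n) (hJ : Function.Injective J) :
    H φ k m l (Equiv.swap l m ∘ J) = - H φ k l m J := by
  by_cases hl : ∃ i, J i = l
  · obtain ⟨i, hi⟩ := hl
    rw [H_zero hφ k l m J i hi, H_zero hφ k m l _ i (by simp [hi])]
    simp
  push Not at hl
  have hc : ((∃ i, (Equiv.swap l m ∘ J) i = l) ∧ ∀ i, (Equiv.swap l m ∘ J) i ≠ k) ↔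
      ((∃ i, J i = m) ∧ ∀ i, J i ≠ k) := by
    have e1 : ∀ x, Equiv.swap l m x = l ↔ x = m := fun x => by
      rw [Equiv.swap_apply_eq_iff, Equiv.swap_apply_left]
    have e2 : ∀ x, Equiv.swap l m x = k ↔ x = k := fun x => by
      rw [Equiv.swap_apply_eq_iff, Equiv.swap_apply_of_ne_of_ne hkl hmk.symm]
    simp [e1, e2]
  unfold H
  simp only [hc]
  split_ifs with h
  swap
  · simp
  obtain ⟨⟨i, rfl⟩, hk⟩ := h
  have him : (image (Equiv.swap l (J i) ∘ J) univ).erase l = (image J univ).erase (J i) := by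
    ext x
    simp only [mem_erase, mem_image, mem_univ, true_and, Function.comp]
    constructor
    · rintro ⟨hx, y, rfl⟩
      have hy : J y ≠ J i := by
        intro h; rw [h] at hx; simp at hx
      rw [Equiv.swap_apply_of_ne_of_ne (hl y) hy]
      exact ⟨hy, y, rfl⟩
    · rintro ⟨hx, y, rfl⟩
      exact ⟨hl y, y, Equiv.swap_apply_of_ne_of_ne (hl y) hx⟩
  rw [him, swap_cons hJ hl i, hφ, Equiv.Perm.sign_swap (Fin.succ_ne_zero i).symm]
  set Q := sortedTuple q (insert k ((image J univ).erase (J i))) k with hQ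
  have hcard : (insert k ((image J univ).erase (J i))).card = q := by
    rw [card_insert_of_notMem (by simp [hk]), card_erase_of_mem (by simp), card_im hJ]
    have := i.isLt
    omega
  have hQs : Equiv.swap l (J i) ∘ Q = Q := by
    funext t
    apply Equiv.swap_apply_of_ne_of_ne
    · exact sorted_swap hcard k (by simp [hl, hkl.symm]) t
    · exact sorted_swap hcard k (by simp [hmk]) t
  have hp : permSign (Fin.cons l Q : Fin (q + 1) → Fin n)
      (Fin.cons k (Equiv.swap l (J i) ∘ J) : Fin (q + 1) → Fin n)
      = permSign (Fin.cons (J i) Q : Fin (q + 1) → Fin n) (Fin.cons k J : Fin (q + 1) → Fin n) := by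
    rw [← permSign_map _ _ (Equiv.swap l (J i)), ← comp_cons, ← comp_cons, hQs]
    rw [Equiv.swap_apply_left, Equiv.swap_apply_of_ne_of_ne hkl hmk.symm]
    congr 2
    funext x; simp
  rw [hp]
  push_cast
  ring

lemma key2 {n q : ℕ} {φ : (Fin (q + 1) → Fin n) → ℂ} (hφ : IsCoeff φ) (k l : Fin n)
    (hkl : k ≠ l) (J : Fin q → Fin n) (hJ : J ∈ Incr n q) :
    H φ k k l (Equiv.swap l k ∘ J) =
      if ∃ i, J i = k then φ (Fin.cons l J : Fin (q + 1) → Fin n) else 0 := by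
  have hinj := ((incr_iff J).1 hJ).injective
  by_cases hl : ∃ i, J i = l
  · obtain ⟨i, hi⟩ := hl
    rw [H_zero hφ k k l _ i (by simp [hi]),
      coeff_zero hφ (Fin.cons l J : Fin (q + 1) → Fin n) 0 i.succ (Fin.succ_ne_zero i).symm (by simp [hi])]
    simp
  push Not at hl
  have hc : ((∃ i, (Equiv.swap l k ∘ J) i = l) ∧ ∀ i, (Equiv.swap l k ∘ J) i ≠ k) ↔
      (∃ i, J i = k) := by
    have e1 : ∀ x, Equiv.swap l k x = l ↔ x = k := fun x => by
      rw [Equiv.swap_apply_eq_iff, Equiv.swap_apply_left]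
    have e2 : ∀ x, Equiv.swap l k x = k ↔ x = l := fun x => by
      rw [Equiv.swap_apply_eq_iff, Equiv.swap_apply_right]
    simp [e1, e2, hl]
  unfold H
  simp only [hc]
  split_ifs with h
  swap
  · rfl
  obtain ⟨i, rfl⟩ := h
  have him : insert (J i) ((image (Equiv.swap l (J i) ∘ J) univ).erase l) = image J univ := by
    ext x
    simp only [mem_insert, mem_erase, mem_image, mem_univ, true_and, Function.comp]
    constructor
    · rintro (rfl | ⟨hx, y, rfl⟩)
      · exact ⟨i, rfl⟩
      have hy : J y ≠ J i := by
        intro h; rw [h] at hx; simp at hx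
      rw [Equiv.swap_apply_of_ne_of_ne (hl y) hy]
      exact ⟨y, rfl⟩
    · rintro ⟨y, rfl⟩
      by_cases hy : J y = J i
      · exact Or.inl hy
      · exact Or.inr ⟨hl y, y, Equiv.swap_apply_of_ne_of_ne (hl y) hy⟩
  rw [him, sorted_incr hJ, swap_cons hinj hl i, hφ, permSign_comp, permSign_self _ (cons_inj hinj hl),
    Equiv.Perm.sign_swap (Fin.succ_ne_zero i).symm]
  simp

lemma main {n q : ℕ} (a : Fin n → ℂ) (φ : (Fin (q + 1) → Fin n) → ℂ) (hφ : IsCoeff φ)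
    (k l : Fin n) (hkl : k ≠ l) :
    (∑ J ∈ (Incr n q).filter (fun J => ∃ i, J i = k),
        φ (cons' (q + 1) l J) * a k)
      - ∑ J ∈ (Incr n q).filter (fun J => ∀ i, J i ≠ k),
          φ (cons' (q + 1) l J) * ∑ i : Fin q,
            ((permSign
                (cons' (q + 1) (J i) (sortedTuple q
                  (insert k ((Finset.image J Finset.univ).erase (J i))) k))
                (cons' (q + 1) k J) : ℤ) : ℂ) * a (J i)
    = ∑ J ∈ (Incr n q).filter (fun J => (∃ i, J i = l) ∧ ∀ i, J i ≠ k),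
        ((permSign
            (cons' (q + 1) l (sortedTuple q
              (insert k ((Finset.image J Finset.univ).erase l)) k))
            (cons' (q + 1) k J) : ℤ) : ℂ)
          * ∑ m : Fin n, a m * φ (cons' (q + 1) m J) := by
  simp only [cons'_eq]
  have hR : ∀ m, ∑ J ∈ Incr n q, H φ k m l (Equiv.swap l m ∘ J) = ∑ J ∈ Incr n q, H φ k m l J :=
    fun m => reindex k _ (fun J _ π => H_symm hφ k m l J π) (Equiv.swap l m) (fun x => by simp)
  have h3 : ∑ J ∈ (Incr n q).filter (fun J => (∃ i, J i = l) ∧ ∀ i, J i ≠ k),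
        ((permSign
            (Fin.cons l (sortedTuple q
              (insert k ((Finset.image J Finset.univ).erase l)) k) : Fin (q + 1) → Fin n)
            (Fin.cons k J : Fin (q + 1) → Fin n) : ℤ) : ℂ)
          * ∑ m : Fin n, a m * φ (Fin.cons m J : Fin (q + 1) → Fin n)
      = ∑ m, a m * ∑ J ∈ Incr n q, H φ k m l J := by
    simp only [Finset.mul_sum]
    rw [Finset.sum_comm, ]
    refine Finset.sum_congr rfl fun m _ => ?_
    rw [Finset.sum_filter]
    refine Finset.sum_congr rfl fun J _ => ?_
    unfold H
    split_ifs
    · ring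
    · simp
  have h2 : ∑ J ∈ (Incr n q).filter (fun J => ∀ i, J i ≠ k),
          φ (Fin.cons l J : Fin (q + 1) → Fin n) * ∑ i : Fin q,
            ((permSign
                (Fin.cons (J i) (sortedTuple q
                  (insert k ((Finset.image J Finset.univ).erase (J i))) k) : Fin (q + 1) → Fin n)
                (Fin.cons k J : Fin (q + 1) → Fin n) : ℤ) : ℂ) * a (J i)
      = ∑ m, a m * ∑ J ∈ Incr n q, H φ k l m J := by
    simp only [Finset.mul_sum]
    rw [Finset.sum_comm (s := univ), Finset.sum_filter]
    refine Finset.sum_congr rfl fun J hJ => ?_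
    have hinj := ((incr_iff J).1 hJ).injective
    rw [← Finset.sum_subset (Finset.subset_univ (image J univ)), Finset.sum_image hinj.injOn]
    · split_ifs with hk
      · refine Finset.sum_congr rfl fun i _ => ?_
        rw [H, if_pos ⟨⟨i, rfl⟩, hk⟩]
        ring
      · symm
        refine Finset.sum_eq_zero fun i _ => ?_
        rw [H, if_neg (fun h => hk h.2)]
        simp
    · intro m _ hm
      rw [H, if_neg, mul_zero]
      rintro ⟨⟨i, hi⟩, -⟩
      exact hm (by simp [← hi])
  have h1 : ∑ J ∈ (Incr n q).filter (fun J => ∃ i, J i = k),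
        φ (Fin.cons l J : Fin (q + 1) → Fin n) * a k
      = ∑ m, if m = k then a k * ∑ J ∈ Incr n q, H φ k k l J else 0 := by
    rw [Finset.sum_ite_eq' univ k, if_pos (mem_univ _), ← hR k, Finset.sum_filter, Finset.mul_sum]
    refine Finset.sum_congr rfl fun J hJ => ?_
    rw [key2 hφ k l hkl J hJ]
    split_ifs
    · ring
    · simp
  rw [h1, h2, h3, ← Finset.sum_sub_distrib]
  refine Finset.sum_congr rfl fun m _ => ?_
  split_ifs with hm
  · subst hm
    have : ∑ J ∈ Incr n q, H φ m l m J = 0 := Finset.sum_eq_zero fun J _ => by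
      rw [H, if_neg]
      rintro ⟨⟨i, hi⟩, h⟩
      exact h i hi
    rw [this]; simp
  · rw [← hR m, Finset.sum_congr rfl (fun J hJ =>
      key1 hφ k m l hkl hm J ((incr_iff J).1 hJ).injective), Finset.sum_neg_distrib]
    ring

end HMaux

/-- the off-diagonal error-term computation from Lemma 4.3 (case `k ≠ l`). -/
theorem offdiagonal_error_term (n j : ℕ) (hn : 2 ≤ n) (hj1 : 1 ≤ j) (hjn : j ≤ n)
    (a : Fin n → ℂ) (φ : (Fin j → Fin n) → ℂ) (hφ : HM.IsCoeff φ)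
    (k l : Fin n) (hkl : k ≠ l) :
    (∑ J ∈ (HM.Incr n (j - 1)).filter (fun J => ∃ i, J i = k),
        φ (HM.cons' j l J) * a k)
      - ∑ J ∈ (HM.Incr n (j - 1)).filter (fun J => ∀ i, J i ≠ k),
          φ (HM.cons' j l J) * ∑ i : Fin (j - 1),
            ((HM.permSign
                (HM.cons' j (J i) (HM.sortedTuple (j - 1)
                  (insert k ((Finset.image J Finset.univ).erase (J i))) k))
                (HM.cons' j k J) : ℤ) : ℂ) * a (J i)
    = ∑ J ∈ (HM.Incr n (j - 1)).filter (fun J => (∃ i, J i = l) ∧ ∀ i, J i ≠ k),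
        ((HM.permSign
            (HM.cons' j l (HM.sortedTuple (j - 1)
              (insert k ((Finset.image J Finset.univ).erase l)) k))
            (HM.cons' j k J) : ℤ) : ℂ)
          * ∑ m : Fin n, a m * φ (HM.cons' j m J) := by
  obtain ⟨q, rfl⟩ : ∃ q, j = q + 1 := ⟨j - 1, by omega⟩
  exact HMaux.main a φ hφ k l hkl
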